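/- Assume (H1)–(H4). Let y be a solution of (E) belonging to the class S₂ = {y > 0, L₁y < 0, L₂y > 0, L₃y < 0} on [t₁, ∞) for some t₁ ≥ t₀. If ∫_{t₀}^∞ q(s)·π(σ(s))^γ ds = ∞, then there exists t₂ ≥ t₁ such that the function t ↦ y(t)/π(t) is nonincreasing on [t₂, ∞) and tends to 0 as t → ∞. -/

import Mathlib

open Filter MeasureTheory Set

/-- Signed power: for exponents that are quotients of odd positive integers,
`x ^ p` preserves the sign of `x`. -/
noncomputable def opow (x p : ℝ) : ℝ := Real.sign x * |x| ^ p

/-- `L₁y = r₁ · (y')^α`. -/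
noncomputable def L1 (r₁ : ℝ → ℝ) (α : ℝ) (y : ℝ → ℝ) : ℝ → ℝ :=
  fun t => r₁ t * opow (deriv y t) α

/-- `L₂y = r₂ · ((L₁y)')^β`. -/
noncomputable def L2 (r₁ r₂ : ℝ → ℝ) (α β : ℝ) (y : ℝ → ℝ) : ℝ → ℝ :=
  fun t => r₂ t * opow (deriv (L1 r₁ α y) t) β

/-- `L₃y = (L₂y)'`. -/
noncomputable def L3 (r₁ r₂ : ℝ → ℝ) (α β : ℝ) (y : ℝ → ℝ) : ℝ → ℝ :=
  deriv (L2 r₁ r₂ α β y)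

/-- A real number which is a quotient of odd positive integers. -/
def OddQuotient (x : ℝ) : Prop :=
  ∃ m n : ℕ, Odd m ∧ Odd n ∧ 0 < m ∧ 0 < n ∧ x = (m : ℝ) / (n : ℝ)

/-- The standing hypotheses (H1)–(H4). -/
structure Hyp (t₀ α β γ : ℝ) (r₁ r₂ q σ : ℝ → ℝ) : Prop where
  ht₀ : 0 < t₀
  hα : OddQuotient α
  hβ : OddQuotient β
  hγ : OddQuotient γ
  hr₁c : ContinuousOn r₁ (Set.Ici t₀)
  hr₂c : ContinuousOn r₂ (Set.Ici t₀)
  hr₁p : ∀ t, t₀ ≤ t → 0 < r₁ t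
  hr₂p : ∀ t, t₀ ≤ t → 0 < r₂ t
  /-- noncanonical: `π₁(t₀) = ∫_{t₀}^∞ r₁^{-1/α} < ∞` -/
  hπ₁fin : IntegrableOn (fun s => r₁ s ^ (-(1/α))) (Set.Ici t₀)
  /-- noncanonical: `π₂(t₀) = ∫_{t₀}^∞ r₂^{-1/β} < ∞` -/
  hπ₂fin : IntegrableOn (fun s => r₂ s ^ (-(1/β))) (Set.Ici t₀)
  hqc : ContinuousOn q (Set.Ici t₀)
  hq0 : ∀ t, t₀ ≤ t → 0 ≤ q t
  /-- `q` does not vanish eventually -/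
  hqnv : ∀ T, t₀ ≤ T → ∃ t, T ≤ t ∧ q t ≠ 0
  hσd : DifferentiableOn ℝ σ (Set.Ici t₀)
  hσd' : ContinuousOn (deriv σ) (Set.Ici t₀)
  hσpos : ∀ t, t₀ ≤ t → 0 < σ t
  hσadv : ∀ t, t₀ ≤ t → t ≤ σ t
  hσmono : ∀ t, t₀ ≤ t → 0 ≤ deriv σ t

/-- `y` is a (nontrivial) solution of equation (E) on some half-line `[T,∞) ⊆ [t₀,∞)`. -/
def IsSolution (t₀ α β γ : ℝ) (r₁ r₂ q σ y : ℝ → ℝ) : Prop :=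
  ∃ T, t₀ ≤ T ∧
    ContinuousOn y (Set.Ici T) ∧
    DifferentiableOn ℝ y (Set.Ici T) ∧
    ContinuousOn (L1 r₁ α y) (Set.Ici T) ∧
    DifferentiableOn ℝ (L1 r₁ α y) (Set.Ici T) ∧
    ContinuousOn (L2 r₁ r₂ α β y) (Set.Ici T) ∧
    DifferentiableOn ℝ (L2 r₁ r₂ α β y) (Set.Ici T) ∧
    (∀ t, T ≤ t → L3 r₁ r₂ α β y t + q t * opow (y (σ t)) γ = 0) ∧
    (∀ T', T ≤ T' → ∃ t, T' ≤ t ∧ y t ≠ 0)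

/-- A function is oscillatory if it has arbitrarily large zeros. -/
def Oscillatory (y : ℝ → ℝ) : Prop := ∀ T : ℝ, ∃ t, T ≤ t ∧ y t = 0

/-- Equation (E) has property A: every solution is oscillatory or tends to `0`. -/
def PropertyA (t₀ α β γ : ℝ) (r₁ r₂ q σ : ℝ → ℝ) : Prop :=
  ∀ y : ℝ → ℝ, IsSolution t₀ α β γ r₁ r₂ q σ y →
    Oscillatory y ∨ Filter.Tendsto y Filter.atTop (nhds 0)

/-- Equation (E) is oscillatory: every solution is oscillatory. -/
def OscillatoryEq (t₀ α β γ : ℝ) (r₁ r₂ q σ : ℝ → ℝ) : Prop :=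
  ∀ y : ℝ → ℝ, IsSolution t₀ α β γ r₁ r₂ q σ y → Oscillatory y

/-- `π₁(t) = ∫_t^∞ r₁(s)^{-1/α} ds`. -/
noncomputable def pi1 (r₁ : ℝ → ℝ) (α : ℝ) (t : ℝ) : ℝ :=
  ∫ s in Set.Ioi t, r₁ s ^ (-(1/α))

/-- `π₂(t) = ∫_t^∞ r₂(s)^{-1/β} ds`. -/
noncomputable def pi2 (r₂ : ℝ → ℝ) (β : ℝ) (t : ℝ) : ℝ :=
  ∫ s in Set.Ioi t, r₂ s ^ (-(1/β))

/-- `π(t) = ∫_t^∞ r₁(s)^{-1/α} · π₂(s)^{1/α} ds`. -/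
noncomputable def piInf (r₁ r₂ : ℝ → ℝ) (α β : ℝ) (t : ℝ) : ℝ :=
  ∫ s in Set.Ioi t, r₁ s ^ (-(1/α)) * (pi2 r₂ β s) ^ (1/α)

/-- The class `S₁`: `y > 0, L₁y < 0, L₂y < 0, L₃y < 0` on `[t₁,∞)`. -/
def InS1 (r₁ r₂ : ℝ → ℝ) (α β : ℝ) (y : ℝ → ℝ) (t₁ : ℝ) : Prop :=
  ∀ t, t₁ ≤ t → 0 < y t ∧ L1 r₁ α y t < 0 ∧ L2 r₁ r₂ α β y t < 0 ∧ L3 r₁ r₂ α β y t < 0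

/-- The class `S₂`: `y > 0, L₁y < 0, L₂y > 0, L₃y < 0` on `[t₁,∞)`. -/
def InS2 (r₁ r₂ : ℝ → ℝ) (α β : ℝ) (y : ℝ → ℝ) (t₁ : ℝ) : Prop :=
  ∀ t, t₁ ≤ t → 0 < y t ∧ L1 r₁ α y t < 0 ∧ 0 < L2 r₁ r₂ α β y t ∧ L3 r₁ r₂ α β y t < 0

/-- The class `S₃`: `y > 0, L₁y > 0, L₂y > 0, L₃y < 0` on `[t₁,∞)`. -/
def InS3 (r₁ r₂ : ℝ → ℝ) (α β : ℝ) (y : ℝ → ℝ) (t₁ : ℝ) : Prop :=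
  ∀ t, t₁ ≤ t → 0 < y t ∧ 0 < L1 r₁ α y t ∧ 0 < L2 r₁ r₂ α β y t ∧ L3 r₁ r₂ α β y t < 0

/-- The class `S₄`: `y > 0, L₁y > 0, L₂y < 0, L₃y < 0` on `[t₁,∞)`. -/
def InS4 (r₁ r₂ : ℝ → ℝ) (α β : ℝ) (y : ℝ → ℝ) (t₁ : ℝ) : Prop :=
  ∀ t, t₁ ≤ t → 0 < y t ∧ 0 < L1 r₁ α y t ∧ L2 r₁ r₂ α β y t < 0 ∧ L3 r₁ r₂ α β y t < 0

/-!
Put `u = y`, `v = -L₁y`, `w = L₂y`, so that `u' = -r₁^{-1/α} v^{1/α}`, `v' = -r₂^{-1/β} w^{1/β}`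
and `w' = -q · u(σ)^γ`. If `u ≥ cπ` eventually with `c > 0`, integrating the last equation would
give `c^γ ∫ q π(σ)^γ ≤ w < ∞`; so `u` drops below every positive multiple of `π` again and again.

For a function `f` vanishing at infinity with `f' = -φω`, the quotient of `f` by
`∫_t^∞ ω` is the `ω`-weighted average of `φ` over `(t, ∞)`, hence inherits the monotonicity of `φ`.
As `w` decreases, this shows first that `v / π₂` decreases and then, since
`u' = -(v / π₂)^{1/α} · r₁^{-1/α} π₂^{1/α}`, that `u / π` decreases.
-/

section Calculus

lemma tendsto_atTop_of_antitoneOn_of_frequently_lt {ι X : Type*} [Preorder ι]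
    [NoMaxOrder ι] [LinearOrder X] [TopologicalSpace X] [OrderTopology X]
    {f : ι → X} {a : ι} {l : X}
    (hf : AntitoneOn f (Ioi a)) (hl : ∀ t > a, l ≤ f t)
    (hfreq : ∀ c > l, ∃ᶠ t in atTop, f t < c) : Tendsto f atTop (nhds l) := by
  refine tendsto_order.2 ⟨fun c hc => ?_, fun c hc => ?_⟩
  · filter_upwards [eventually_gt_atTop a] with t ht using hc.trans_le (hl t ht)
  · obtain ⟨s, hsc, has⟩ := ((hfreq c hc).and_eventually (eventually_gt_atTop a)).exists
    filter_upwards [eventually_ge_atTop s] with t hst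
    exact (hf has (has.trans_le hst) hst).trans_lt hsc

lemma antitoneOn_of_hasDerivAt_nonpos {D : Set ℝ} {f f' : ℝ → ℝ} (hD : Convex ℝ D)
    (hf : ∀ t ∈ D, HasDerivAt f (f' t) t) (hf' : ∀ t ∈ D, f' t ≤ 0) : AntitoneOn f D :=
  antitoneOn_of_hasDerivWithinAt_nonpos hD (fun t ht => (hf t ht).continuousAt.continuousWithinAt)
    (fun t ht => (hf t (interior_subset ht)).hasDerivWithinAt)
    (fun t ht => hf' t (interior_subset ht))

lemma hasDerivAt_integral_Ioi {E : Type*} [NormedAddCommGroup E] [NormedSpace ℝ E]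
    [CompleteSpace E] {f : ℝ → E} {a t : ℝ} (hf : IntegrableOn f (Ioi a)) (hat : a < t)
    (hft : ContinuousAt f t) : HasDerivAt (fun x => ∫ s in Ioi x, f s) (-f t) t := by
  have hprimitive : HasDerivAt (fun x => ∫ s in a..x, f s) (f t) t :=
    intervalIntegral.integral_hasDerivAt_right
      ((intervalIntegrable_iff_integrableOn_Ioc_of_le hat.le).2 (hf.mono_set Ioc_subset_Ioi_self))
      ⟨Ioi a, Ioi_mem_nhds hat, hf.aestronglyMeasurable⟩ hft
  refine (hprimitive.const_sub (∫ s in Ioi a, f s)).congr_of_eventuallyEq ?_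
  filter_upwards [Ioi_mem_nhds hat] with x hx
  rw [← intervalIntegral.integral_Ioi_sub_Ioi hf (le_of_lt hx), sub_sub_cancel]

lemma not_tendsto_integral_atTop_of_hasDerivAt_le_neg {w w' F : ℝ → ℝ} {t₀ a : ℝ}
    (hF : ContinuousOn F (Ioi a)) (hw : ∀ t > a, HasDerivAt w (w' t) t)
    (hw' : ∀ t > a, w' t ≤ -F t) (hw_nonneg : ∀ t > a, 0 ≤ w t) :
    ¬ Tendsto (fun t => ∫ s in t₀..t, F s) atTop atTop := by
  intro hdiv
  obtain ⟨b, hb⟩ := eventually_atTop.1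
    ((hdiv.eventually_gt_atTop 0).and (eventually_gt_atTop a))
  -- A non-integrable integrand would give the junk value `0`.
  have hint : ∀ t ≥ b, IntervalIntegrable F volume t₀ t := fun t ht => by
    by_contra hni
    exact (hb t ht).1.ne' (intervalIntegral.integral_undef hni)
  have hderiv : ∀ t ∈ Ici b, HasDerivAt (fun t => w t + ∫ s in t₀..t, F s) (w' t + F t) t :=
    fun t ht => (hw t (hb t ht).2).add <| intervalIntegral.integral_hasDerivAt_right (hint t ht)
      (hF.stronglyMeasurableAtFilter isOpen_Ioi t (hb t ht).2)
      (hF.continuousAt (Ioi_mem_nhds (hb t ht).2))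
  have hanti := antitoneOn_of_hasDerivAt_nonpos (convex_Ici b) hderiv
    fun t ht => by linarith [hw' t (hb t ht).2]
  obtain ⟨t, hlarge, hbt⟩ := ((hdiv.eventually_gt_atTop (w b + ∫ s in t₀..b, F s)).and
    (eventually_ge_atTop b)).exists
  have hle : w t + ∫ s in t₀..t, F s ≤ w b + ∫ s in t₀..b, F s := hanti self_mem_Ici hbt hbt
  linarith [hw_nonneg t (hb t hbt).2]

end Calculus

/-- The tail `t ↦ ∫_t^∞ f` of an improper integral; `pi2` and `piInf` are instances of it. -/
noncomputable def tailIntegral (f : ℝ → ℝ) (t : ℝ) : ℝ := ∫ s in Ioi t, f s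

lemma tendsto_tailIntegral_atTop (f : ℝ → ℝ) : Tendsto (tailIntegral f) atTop (nhds 0) :=
  tendsto_integral_Ioi_zero tendsto_id

/-- A positive weight on `(a, ∞)` of finite total mass. Continuity makes `tailIntegral ω`
differentiable with derivative `-ω`. -/
structure IsTailWeight (ω : ℝ → ℝ) (a : ℝ) : Prop where
  continuousOn : ContinuousOn ω (Ioi a)
  pos : ∀ t > a, 0 < ω t
  integrableOn : IntegrableOn ω (Ioi a)

namespace IsTailWeight

variable {ω f φ : ℝ → ℝ} {a b k t : ℝ}

lemma mono (hω : IsTailWeight ω a) (hab : a ≤ b) : IsTailWeight ω b where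
  continuousOn := hω.continuousOn.mono (Ioi_subset_Ioi hab)
  pos t ht := hω.pos t (hab.trans_lt ht)
  integrableOn := hω.integrableOn.mono_set (Ioi_subset_Ioi hab)

lemma hasDerivAt_tailIntegral (hω : IsTailWeight ω a) (hat : a < t) :
    HasDerivAt (tailIntegral ω) (-ω t) t :=
  hasDerivAt_integral_Ioi hω.integrableOn hat (hω.continuousOn.continuousAt (Ioi_mem_nhds hat))

lemma continuousOn_tailIntegral (hω : IsTailWeight ω a) : ContinuousOn (tailIntegral ω) (Ioi a) :=
  fun _ ht => (hω.hasDerivAt_tailIntegral ht).continuousAt.continuousWithinAt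

lemma nonneg_ae (hω : IsTailWeight ω a) : 0 ≤ᵐ[volume.restrict (Ioi a)] ω := by
  filter_upwards [ae_restrict_mem measurableSet_Ioi] with t ht using (hω.pos t ht).le

lemma tailIntegral_pos (hω : IsTailWeight ω a) : 0 < tailIntegral ω a := by
  have hsupport : Function.support ω ∩ Ioi a = Ioi a :=
    inter_eq_right.2 fun t ht => (hω.pos t ht).ne'
  rw [tailIntegral, setIntegral_pos_iff_support_of_nonneg_ae hω.nonneg_ae hω.integrableOn,
    hsupport, Real.volume_Ioi]
  exact ENNReal.zero_lt_top

lemma tailIntegral_le (hω : IsTailWeight ω a) (hat : a ≤ t) :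
    tailIntegral ω t ≤ tailIntegral ω a :=
  setIntegral_mono_set hω.integrableOn hω.nonneg_ae (Ioi_subset_Ioi hat).eventuallyLE

lemma integrableOn_mul_tailIntegral_rpow {p : ℝ → ℝ} {κ : ℝ} (hω : IsTailWeight ω a)
    (hp : IntegrableOn p (Ioi a)) (hκ : 0 ≤ κ) :
    IntegrableOn (fun s => p s * tailIntegral ω s ^ κ) (Ioi a) := by
  refine hp.mul_bdd (c := tailIntegral ω a ^ κ)
    ((hω.continuousOn_tailIntegral.rpow_const fun _ _ => .inr hκ).aestronglyMeasurable
      measurableSet_Ioi) ?_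
  filter_upwards [ae_restrict_mem measurableSet_Ioi] with s (hs : a < s)
  have hpos := (hω.mono hs.le).tailIntegral_pos.le
  rw [Real.norm_of_nonneg (Real.rpow_nonneg hpos κ)]
  exact Real.rpow_le_rpow hpos (hω.tailIntegral_le hs.le) hκ

lemma mul_tailIntegral_rpow {p : ℝ → ℝ} {κ : ℝ} (hω : IsTailWeight ω a)
    (hp : ContinuousOn p (Ioi a)) (hp_pos : ∀ t > a, 0 < p t)
    (hint : IntegrableOn (fun s => p s * tailIntegral ω s ^ κ) (Ioi a)) :
    IsTailWeight (fun s => p s * tailIntegral ω s ^ κ) a where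
  continuousOn := hp.mul <| hω.continuousOn_tailIntegral.rpow_const fun _ ht =>
    .inl (hω.mono (le_of_lt ht)).tailIntegral_pos.ne'
  pos t ht := mul_pos (hp_pos t ht) (Real.rpow_pos_of_pos (hω.mono ht.le).tailIntegral_pos κ)
  integrableOn := hint

lemma mul_tailIntegral_le (hω : IsTailWeight ω a) (hat : a < t)
    (hf : ∀ s ≥ t, HasDerivAt f (-(φ s * ω s)) s) (hf_nonneg : ∀ s ≥ t, 0 ≤ f s)
    (hφ : ∀ s ≥ t, k ≤ φ s) : k * tailIntegral ω t ≤ f t := by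
  have hanti : AntitoneOn (fun s => f s - k * tailIntegral ω s) (Ici t) :=
    antitoneOn_of_hasDerivAt_nonpos (convex_Ici t)
      (fun s hs => (hf s hs).sub ((hω.hasDerivAt_tailIntegral (hat.trans_le hs)).const_mul k))
      fun s hs => by
        linarith [mul_le_mul_of_nonneg_right (hφ s hs) (hω.pos s (hat.trans_le hs)).le]
  have hlim : Tendsto (fun s => -(k * tailIntegral ω s)) atTop (nhds 0) := by
    simpa using ((tendsto_tailIntegral_atTop ω).const_mul k).neg
  have hdiff : 0 ≤ f t - k * tailIntegral ω t := by
    refine le_of_tendsto hlim ?_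
    filter_upwards [eventually_ge_atTop t] with s hs
    linarith [hanti self_mem_Ici hs hs, hf_nonneg s hs]
  linarith

lemma le_mul_tailIntegral (hω : IsTailWeight ω a) (hat : a < t)
    (hf : ∀ s ≥ t, HasDerivAt f (-(φ s * ω s)) s) (hf_lim : Tendsto f atTop (nhds 0))
    (hφ : ∀ s ≥ t, φ s ≤ k) : f t ≤ k * tailIntegral ω t := by
  have hanti : AntitoneOn (fun s => k * tailIntegral ω s - f s) (Ici t) :=
    antitoneOn_of_hasDerivAt_nonpos (convex_Ici t)
      (fun s hs => ((hω.hasDerivAt_tailIntegral (hat.trans_le hs)).const_mul k).sub (hf s hs))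
      fun s hs => by
        linarith [mul_le_mul_of_nonneg_right (hφ s hs) (hω.pos s (hat.trans_le hs)).le]
  have hlim : Tendsto (fun s => k * tailIntegral ω s - f s) atTop (nhds 0) := by
    simpa using ((tendsto_tailIntegral_atTop ω).const_mul k).sub hf_lim
  have hdiff : 0 ≤ k * tailIntegral ω t - f t := by
    refine le_of_tendsto hlim ?_
    filter_upwards [eventually_ge_atTop t] with s hs using hanti self_mem_Ici hs hs
  linarith

lemma antitoneOn_div_tailIntegral (hω : IsTailWeight ω a)
    (hf : ∀ t > a, HasDerivAt f (-(φ t * ω t)) t) (hf_lim : Tendsto f atTop (nhds 0))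
    (hφ : AntitoneOn φ (Ioi a)) : AntitoneOn (fun t => f t / tailIntegral ω t) (Ioi a) := by
  refine antitoneOn_of_hasDerivAt_nonpos (convex_Ioi a)
    (fun t ht => (hf t ht).div (hω.hasDerivAt_tailIntegral ht)
      (hω.mono (le_of_lt ht)).tailIntegral_pos.ne')
    fun t (ht : a < t) => div_nonpos_of_nonpos_of_nonneg ?_ (sq_nonneg _)
  have hle : f t ≤ φ t * tailIntegral ω t :=
    hω.le_mul_tailIntegral ht (fun s hs => hf s (ht.trans_le hs)) hf_lim
      fun s hs => hφ ht (ht.trans_le hs) hs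
  calc -(φ t * ω t) * tailIntegral ω t - f t * -ω t
      = (f t - φ t * tailIntegral ω t) * ω t := by ring
    _ ≤ 0 := mul_nonpos_of_nonpos_of_nonneg (sub_nonpos.2 hle) (hω.pos t ht).le

lemma frequently_lt_of_frequently_lt_mul (hω : IsTailWeight ω a)
    (hf : ∀ t > a, HasDerivAt f (-(φ t * ω t)) t) (hf_nonneg : ∀ t > a, 0 ≤ f t)
    (hfreq : ∃ᶠ t in atTop, f t < k * tailIntegral ω t) : ∃ᶠ t in atTop, φ t < k := by
  intro hev
  obtain ⟨b, hb⟩ := eventually_atTop.1 (hev.and (eventually_gt_atTop a))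
  refine hfreq ((eventually_ge_atTop b).mono fun t ht => not_lt.2 ?_)
  exact hω.mul_tailIntegral_le (hb t ht).2 (fun s hs => hf s (hb s (ht.trans hs)).2)
    (fun s hs => hf_nonneg s (hb s (ht.trans hs)).2)
    (fun s hs => not_lt.1 (hb s (ht.trans hs)).1)

lemma tendsto_zero_of_frequently_lt_mul (hω : IsTailWeight ω a)
    (hf : ∀ t > a, HasDerivAt f (-(φ t * ω t)) t) (hf_nonneg : ∀ t > a, 0 ≤ f t)
    (hφ : ∀ t > a, 0 ≤ φ t) (hfreq : ∃ᶠ t in atTop, f t < k * tailIntegral ω t) :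
    Tendsto f atTop (nhds 0) := by
  have hanti : AntitoneOn f (Ioi a) := antitoneOn_of_hasDerivAt_nonpos (convex_Ioi a) hf
    fun t ht => neg_nonpos.2 (mul_nonneg (hφ t ht) (hω.pos t ht).le)
  refine tendsto_atTop_of_antitoneOn_of_frequently_lt hanti hf_nonneg fun c hc => ?_
  have hlim : Tendsto (fun t => k * tailIntegral ω t) atTop (nhds 0) := by
    simpa using (tendsto_tailIntegral_atTop ω).const_mul k
  exact (hfreq.and_eventually (hlim.eventually_lt_const hc)).mono fun t ht => ht.1.trans ht.2

lemma antitoneOn_div_and_tendsto_zero {u v φ ρ : ℝ → ℝ} {κ : ℝ} (hκ : 0 < κ)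
    (hω : IsTailWeight ω a) (hρ : IsTailWeight ρ a)
    (hu : ∀ t > a, HasDerivAt u (-((v t / tailIntegral ρ t) ^ κ * ω t)) t)
    (hv : ∀ t > a, HasDerivAt v (-(φ t * ρ t)) t)
    (hu_nonneg : ∀ t > a, 0 ≤ u t) (hv_nonneg : ∀ t > a, 0 ≤ v t) (hφ_nonneg : ∀ t > a, 0 ≤ φ t)
    (hφ : AntitoneOn φ (Ioi a))
    (hfreq : ∀ c > 0, ∃ᶠ t in atTop, u t < c * tailIntegral ω t) :
    AntitoneOn (fun t => u t / tailIntegral ω t) (Ioi a) ∧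
      Tendsto (fun t => u t / tailIntegral ω t) atTop (nhds 0) := by
  have hω_pos : ∀ t > a, 0 < tailIntegral ω t := fun t ht => (hω.mono ht.le).tailIntegral_pos
  have hρ_pos : ∀ t > a, 0 < tailIntegral ρ t := fun t ht => (hρ.mono ht.le).tailIntegral_pos
  have hvρ_nonneg : ∀ t > a, 0 ≤ v t / tailIntegral ρ t := fun t ht =>
    div_nonneg (hv_nonneg t ht) (hρ_pos t ht).le
  have hv_freq : ∃ᶠ t in atTop, v t < 1 * tailIntegral ρ t :=
    ((hω.frequently_lt_of_frequently_lt_mul hu hu_nonneg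
      (hfreq 1 one_pos)).and_eventually (eventually_gt_atTop a)).mono fun t ⟨hlt, ht⟩ =>
        (div_lt_iff₀ (hρ_pos t ht)).1 <|
          not_le.1 fun hge => hlt.not_ge (Real.one_le_rpow hge hκ.le)
  have hu_lim : Tendsto u atTop (nhds 0) :=
    hω.tendsto_zero_of_frequently_lt_mul hu hu_nonneg
      (fun t ht => Real.rpow_nonneg (hvρ_nonneg t ht) κ) (hfreq 1 one_pos)
  have hv_lim : Tendsto v atTop (nhds 0) :=
    hρ.tendsto_zero_of_frequently_lt_mul hv hv_nonneg hφ_nonneg hv_freq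
  have hvρ : AntitoneOn (fun t => v t / tailIntegral ρ t) (Ioi a) :=
    hρ.antitoneOn_div_tailIntegral hv hv_lim hφ
  have huω : AntitoneOn (fun t => u t / tailIntegral ω t) (Ioi a) :=
    hω.antitoneOn_div_tailIntegral hu hu_lim fun s hs t ht hst =>
      Real.rpow_le_rpow (hvρ_nonneg t ht) (hvρ hs ht hst) hκ.le
  refine ⟨huω, tendsto_atTop_of_antitoneOn_of_frequently_lt huω
    (fun t ht => div_nonneg (hu_nonneg t ht) (hω_pos t ht).le) fun c hc => ?_⟩
  exact ((hfreq c hc).and_eventually (eventually_gt_atTop a)).mono fun t ⟨hlt, ht⟩ =>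
    (div_lt_iff₀ (hω_pos t ht)).2 hlt

end IsTailWeight

lemma frequently_lt_mul_of_tendsto_integral_atTop {w y g q σ : ℝ → ℝ} {γ t₀ a c : ℝ}
    (hγ : 0 ≤ γ) (hq : ContinuousOn q (Ioi a)) (hq_nonneg : ∀ t > a, 0 ≤ q t)
    (hσ : ContinuousOn σ (Ioi a)) (hσ_lim : Tendsto σ atTop atTop)
    (hg : ContinuousOn g (Ioi a)) (hg_nonneg : ∀ t > a, 0 ≤ g t)
    (hw : ∀ t > a, HasDerivAt w (-(q t * y (σ t) ^ γ)) t) (hw_nonneg : ∀ t > a, 0 ≤ w t)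
    (hdiv : Tendsto (fun t => ∫ s in t₀..t, q s * g (σ s) ^ γ) atTop atTop) (hc : 0 < c) :
    ∃ᶠ t in atTop, y t < c * g t := by
  intro hev
  obtain ⟨b, hb⟩ := eventually_atTop.1 <| (eventually_gt_atTop a).and <|
    hσ_lim.eventually ((eventually_gt_atTop a).and hev)
  have hF : ContinuousOn (fun s => c ^ γ * (q s * g (σ s) ^ γ)) (Ioi b) :=
    continuousOn_const.mul <| (hq.mono fun t ht => (hb t (le_of_lt ht)).1).mul <|
      (hg.comp (hσ.mono fun t ht => (hb t (le_of_lt ht)).1)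
        fun t ht => (hb t (le_of_lt ht)).2.1).rpow_const fun _ _ => .inr hγ
  refine not_tendsto_integral_atTop_of_hasDerivAt_le_neg (t₀ := t₀) hF
    (fun t ht => hw t (hb t ht.le).1) (fun t ht => neg_le_neg ?_)
    (fun t ht => hw_nonneg t (hb t ht.le).1) ?_
  · obtain ⟨hat, haσ, hle⟩ := hb t ht.le
    have hg0 := hg_nonneg (σ t) haσ
    calc c ^ γ * (q t * g (σ t) ^ γ) = q t * (c * g (σ t)) ^ γ := by
          rw [Real.mul_rpow hc.le hg0]; ring
      _ ≤ q t * y (σ t) ^ γ := mul_le_mul_of_nonneg_left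
          (Real.rpow_le_rpow (mul_nonneg hc.le hg0) (not_lt.1 hle) hγ) (hq_nonneg t hat)
  · simpa only [intervalIntegral.integral_const_mul] using
      hdiv.const_mul_atTop (Real.rpow_pos_of_pos hc γ)

section SignedPower

lemma opow_of_pos {x : ℝ} (hx : 0 < x) (p : ℝ) : opow x p = x ^ p := by
  rw [opow, Real.sign_of_pos hx, abs_of_pos hx, one_mul]

lemma opow_neg (x p : ℝ) : opow (-x) p = -opow x p := by
  rw [opow, opow, Real.sign_neg, abs_neg, neg_mul]

lemma pos_of_opow_pos {x p : ℝ} (h : 0 < opow x p) : 0 < x := by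
  by_contra! hx
  rcases hx.eq_or_lt with rfl | hx
  · simp [opow] at h
  · rw [← neg_neg x, opow_neg, opow_of_pos (neg_pos.2 hx)] at h
    linarith [Real.rpow_nonneg (neg_pos.2 hx).le p]

lemma eq_rpow_mul_rpow_of_mul_opow_pos {r x p : ℝ} (hr : 0 < r) (hp : p ≠ 0)
    (h : 0 < r * opow x p) : x = (r * opow x p) ^ (1 / p) * r ^ (-(1 / p)) := by
  have hx : 0 < x := pos_of_opow_pos (pos_of_mul_pos_right h hr.le)
  rw [opow_of_pos hx, Real.mul_rpow hr.le (Real.rpow_nonneg hx.le p), ← Real.rpow_mul hx.le,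
    mul_one_div_cancel hp, Real.rpow_one, mul_right_comm, ← Real.rpow_add hr, add_neg_cancel,
    Real.rpow_zero, one_mul]

end SignedPower

lemma hasDerivAt_of_L1_neg {r₁ y : ℝ → ℝ} {α t : ℝ} (hα : α ≠ 0) (hr₁ : 0 < r₁ t)
    (hy : DifferentiableAt ℝ y t) (hL1 : L1 r₁ α y t < 0) :
    HasDerivAt y (-((-L1 r₁ α y t) ^ (1 / α) * r₁ t ^ (-(1 / α)))) t := by
  have hL1_eq : -L1 r₁ α y t = r₁ t * opow (-deriv y t) α := by
    rw [L1, opow_neg, mul_neg]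
  have hderiv := eq_rpow_mul_rpow_of_mul_opow_pos hr₁ hα (hL1_eq ▸ neg_pos.2 hL1)
  rw [← hL1_eq] at hderiv
  rw [← hderiv, neg_neg]
  exact hy.hasDerivAt

lemma hasDerivAt_L1_of_L2_pos {r₁ r₂ y : ℝ → ℝ} {α β t : ℝ} (hβ : β ≠ 0) (hr₂ : 0 < r₂ t)
    (hL1 : DifferentiableAt ℝ (L1 r₁ α y) t) (hL2 : 0 < L2 r₁ r₂ α β y t) :
    HasDerivAt (L1 r₁ α y) (L2 r₁ r₂ α β y t ^ (1 / β) * r₂ t ^ (-(1 / β))) t := by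
  rw [L2, ← eq_rpow_mul_rpow_of_mul_opow_pos hr₂ hβ hL2]
  exact hL1.hasDerivAt

lemma OddQuotient.pos {x : ℝ} (h : OddQuotient x) : 0 < x := by
  obtain ⟨m, n, -, -, hm, hn, rfl⟩ := h
  positivity

lemma isTailWeight_rpow {r : ℝ → ℝ} {p a : ℝ} (hr : ContinuousOn r (Ioi a))
    (hr_pos : ∀ t > a, 0 < r t) (hint : IntegrableOn (fun s => r s ^ p) (Ioi a)) :
    IsTailWeight (fun s => r s ^ p) a where
  continuousOn := hr.rpow_const fun t ht => .inl (hr_pos t ht).ne'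
  pos t ht := Real.rpow_pos_of_pos (hr_pos t ht) p
  integrableOn := hint

lemma Hyp.integrableOn_piInf_integrand {t₀ α β γ : ℝ} {r₁ r₂ q σ : ℝ → ℝ}
    (H : Hyp t₀ α β γ r₁ r₂ q σ) :
    IntegrableOn (fun s => r₁ s ^ (-(1 / α)) * pi2 r₂ β s ^ (1 / α)) (Ici t₀) :=
  have hρ := isTailWeight_rpow (H.hr₂c.mono Ioi_subset_Ici_self) (fun t ht => H.hr₂p t ht.le)
    (H.hπ₂fin.mono_set Ioi_subset_Ici_self)
  (integrableOn_Ici_iff_integrableOn_Ioi).2 <| hρ.integrableOn_mul_tailIntegral_rpow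
    (H.hπ₁fin.mono_set Ioi_subset_Ici_self) (one_div_nonneg.2 H.hα.pos.le)

lemma IsSolution.exists_forall_hasDerivAt {t₀ α β γ t₁ : ℝ} {r₁ r₂ q σ y : ℝ → ℝ}
    (hα : α ≠ 0) (hβ : β ≠ 0) (hr₁_pos : ∀ t, t₀ ≤ t → 0 < r₁ t)
    (hr₂_pos : ∀ t, t₀ ≤ t → 0 < r₂ t) (hσ_lim : Tendsto σ atTop atTop)
    (hy : IsSolution t₀ α β γ r₁ r₂ q σ y) (hS2 : InS2 r₁ r₂ α β y t₁) :
    ∃ a, t₀ ≤ a ∧ t₁ ≤ a ∧ ∀ t > a,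
      HasDerivAt y (-((-L1 r₁ α y t) ^ (1 / α) * r₁ t ^ (-(1 / α)))) t ∧
      HasDerivAt (fun t => -L1 r₁ α y t)
        (-(L2 r₁ r₂ α β y t ^ (1 / β) * r₂ t ^ (-(1 / β)))) t ∧
      HasDerivAt (L2 r₁ r₂ α β y) (-(q t * y (σ t) ^ γ)) t := by
  obtain ⟨T, hT, -, hy_diff, -, hL1_diff, -, hL2_diff, heq, -⟩ := hy
  obtain ⟨b, hb⟩ := eventually_atTop.1 (hσ_lim.eventually_ge_atTop t₁)
  refine ⟨max T (max t₁ b), hT.trans (le_max_left _ _),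
    (le_max_left _ _).trans (le_max_right _ _), fun t ht => ?_⟩
  obtain ⟨hTt, ht₁, hbt⟩ : T < t ∧ t₁ < t ∧ b < t := by simpa only [gt_iff_lt, max_lt_iff] using ht
  have ht₀ : t₀ ≤ t := hT.trans hTt.le
  have hTt_nhds : Ici T ∈ nhds t := Ici_mem_nhds hTt
  obtain ⟨-, hL1_neg, hL2_pos, -⟩ := hS2 t ht₁.le
  refine ⟨hasDerivAt_of_L1_neg hα (hr₁_pos t ht₀) (hy_diff.differentiableAt hTt_nhds) hL1_neg,
    (hasDerivAt_L1_of_L2_pos hβ (hr₂_pos t ht₀) (hL1_diff.differentiableAt hTt_nhds) hL2_pos).neg,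
    ?_⟩
  rw [← opow_of_pos (hS2 (σ t) (hb t hbt.le)).1, ← eq_neg_of_add_eq_zero_left (heq t hTt.le)]
  exact (hL2_diff.differentiableAt hTt_nhds).hasDerivAt

theorem S2_ratio_decreasing_general {t₀ α β γ t₁ : ℝ} {r₁ r₂ q σ y : ℝ → ℝ}
    (hα : 0 < α) (hβ : 0 < β) (hγ : 0 ≤ γ)
    (hr₁ : ContinuousOn r₁ (Ici t₀)) (hr₂ : ContinuousOn r₂ (Ici t₀))
    (hr₁_pos : ∀ t, t₀ ≤ t → 0 < r₁ t) (hr₂_pos : ∀ t, t₀ ≤ t → 0 < r₂ t)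
    (hπ₂ : IntegrableOn (fun s => r₂ s ^ (-(1 / β))) (Ici t₀))
    (hπ : IntegrableOn (fun s => r₁ s ^ (-(1 / α)) * pi2 r₂ β s ^ (1 / α)) (Ici t₀))
    (hq : ContinuousOn q (Ici t₀)) (hq_nonneg : ∀ t, t₀ ≤ t → 0 ≤ q t)
    (hσ : ContinuousOn σ (Ici t₀)) (hσ_lim : Tendsto σ atTop atTop)
    (hy : IsSolution t₀ α β γ r₁ r₂ q σ y) (hS2 : InS2 r₁ r₂ α β y t₁)
    (hdiv : Tendsto (fun t => ∫ s in t₀..t, q s * piInf r₁ r₂ α β (σ s) ^ γ) atTop atTop) :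
    ∃ t₂, t₁ ≤ t₂ ∧ AntitoneOn (fun t => y t / piInf r₁ r₂ α β t) (Ici t₂) ∧
      Tendsto (fun t => y t / piInf r₁ r₂ α β t) atTop (nhds 0) := by
  obtain ⟨a, ht₀a, ht₁a, hderiv⟩ :=
    hy.exists_forall_hasDerivAt hα.ne' hβ.ne' hr₁_pos hr₂_pos hσ_lim hS2
  have hsub : Ioi a ⊆ Ici t₀ := fun t ht => ht₀a.trans (le_of_lt ht)
  have hS2a : InS2 r₁ r₂ α β y a := fun t ht => hS2 t (ht₁a.trans ht)
  have hρ : IsTailWeight (fun s => r₂ s ^ (-(1 / β))) a :=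
    isTailWeight_rpow (hr₂.mono hsub) (fun t ht => hr₂_pos t (hsub ht)) (hπ₂.mono_set hsub)
  have hω : IsTailWeight (fun s => r₁ s ^ (-(1 / α)) * pi2 r₂ β s ^ (1 / α)) a :=
    hρ.mul_tailIntegral_rpow
      ((hr₁.mono hsub).rpow_const fun t ht => .inl (hr₁_pos t (hsub ht)).ne')
      (fun t ht => Real.rpow_pos_of_pos (hr₁_pos t (hsub ht)) _) (hπ.mono_set hsub)
  have hfreq : ∀ c > 0, ∃ᶠ t in atTop, y t < c * piInf r₁ r₂ α β t := fun c hc =>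
    frequently_lt_mul_of_tendsto_integral_atTop hγ (hq.mono hsub)
      (fun t ht => hq_nonneg t (hsub ht)) (hσ.mono hsub) hσ_lim hω.continuousOn_tailIntegral
      (fun t ht => (hω.mono ht.le).tailIntegral_pos.le) (fun t ht => (hderiv t ht).2.2)
      (fun t ht => (hS2a t ht.le).2.2.1.le) hdiv hc
  have hL2_anti : AntitoneOn (L2 r₁ r₂ α β y) (Ioi a) :=
    antitoneOn_of_hasDerivAt_nonpos (convex_Ioi a) (fun t ht => (hderiv t ht).2.2)
      fun t ht => (hderiv t ht).2.2.deriv ▸ (hS2a t (le_of_lt ht)).2.2.2.le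
  have hy_deriv : ∀ t > a, HasDerivAt y (-((-L1 r₁ α y t / pi2 r₂ β t) ^ (1 / α) *
      (r₁ t ^ (-(1 / α)) * pi2 r₂ β t ^ (1 / α)))) t := fun t ht => by
    have hpi2 : 0 < pi2 r₂ β t := (hρ.mono ht.le).tailIntegral_pos
    rw [mul_left_comm, ← Real.mul_rpow (div_pos (neg_pos.2 (hS2a t ht.le).2.1) hpi2).le hpi2.le,
      div_mul_cancel₀ _ hpi2.ne', mul_comm]
    exact (hderiv t ht).1
  obtain ⟨hanti, hlim⟩ := hω.antitoneOn_div_and_tendsto_zero (one_div_pos.2 hα) hρ hy_deriv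
    (fun t ht => (hderiv t ht).2.1) (fun t ht => (hS2a t ht.le).1.le)
    (fun t ht => (neg_pos.2 (hS2a t ht.le).2.1).le)
    (fun t ht => Real.rpow_nonneg (hS2a t ht.le).2.2.1.le _)
    (fun s hs t ht hst => Real.rpow_le_rpow (hS2a t (le_of_lt ht)).2.2.1.le (hL2_anti hs ht hst)
      (one_div_nonneg.2 hβ.le)) hfreq
  exact ⟨a + 1, by linarith, hanti.mono fun t ht => (lt_add_one a).trans_le ht, hlim⟩

theorem S2_ratio_decreasing (t₀ α β γ t₁ : ℝ) (r₁ r₂ q σ y : ℝ → ℝ)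
    (H : Hyp t₀ α β γ r₁ r₂ q σ)
    (hy : IsSolution t₀ α β γ r₁ r₂ q σ y)
    (ht₁ : t₀ ≤ t₁)
    (hS2 : InS2 r₁ r₂ α β y t₁)
    (hdiv : Filter.Tendsto (fun t => ∫ s in t₀..t, q s * (piInf r₁ r₂ α β (σ s)) ^ γ)
      Filter.atTop Filter.atTop) :
    ∃ t₂, t₁ ≤ t₂ ∧ AntitoneOn (fun t => y t / piInf r₁ r₂ α β t) (Set.Ici t₂) ∧
      Filter.Tendsto (fun t => y t / piInf r₁ r₂ α β t) Filter.atTop (nhds 0) := by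
  exact S2_ratio_decreasing_general H.hα.pos H.hβ.pos H.hγ.pos.le H.hr₁c H.hr₂c H.hr₁p H.hr₂p
    H.hπ₂fin H.integrableOn_piInf_integrand H.hqc H.hq0 H.hσd.continuousOn
    (tendsto_atTop_mono' _ ((eventually_ge_atTop t₀).mono H.hσadv) tendsto_id) hy hS2 hdiv
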